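/- Let ε,b > 0 and let c:(−ε,b) → ℝ^{n+2} be smooth with ⟨c(t),c(t)⟩ = 0, c(t) ≠ 0 and ⟨c′(t),c′(t)⟩ > 0 for all t. Let λ ∈ ℝ∖{0} and let ĉ:(0,b) → ℝ^{n+2} be differentiable with ĉ(t) ≠ 0 and ⟨ĉ(t),ĉ(t)⟩ = 0 for all t, satisfying ĉ′(t) = (λ/t)·(⟨c(t),ĉ(t)⟩c′(t) − ⟨c′(t),ĉ(t)⟩c(t)) for all t ∈ (0,b). Then there exist nonzero reals r(t) such that r(t)·ĉ(t) → c(0) as t → 0⁺; that is, the λ-Darboux transform converges projectively to the point ⟨c(0)⟩. -/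

import Mathlib

open scoped BigOperators Topology
open Filter Set MeasureTheory

noncomputable section

abbrev E (n : ℕ) := EuclideanSpace ℝ (Fin (n + 2))

/-- Minkowski inner product of signature (n+1,1). -/
def mink {n : ℕ} (x y : E n) : ℝ :=
  ∑ i, (if i = Fin.last (n + 1) then (-1 : ℝ) else 1) * x i * y i

variable {n : ℕ}

lemma mink_comm (x y : E n) : mink x y = mink y x :=
  Finset.sum_congr rfl fun i _ => by ring

lemma mink_add_right (v x y : E n) : mink v (x + y) = mink v x + mink v y := by
  simp [mink, mul_add, Finset.sum_add_distrib]

lemma mink_smul_right (v : E n) (c : ℝ) (x : E n) : mink v (c • x) = c * mink v x := by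
  unfold mink
  rw [Finset.mul_sum]
  refine Finset.sum_congr rfl fun i _ => ?_
  simp only [PiLp.smul_apply, smul_eq_mul]
  ring

lemma mink_add_left (x y v : E n) : mink (x + y) v = mink x v + mink y v := by
  rw [mink_comm, mink_add_right, mink_comm v x, mink_comm v y]

lemma mink_smul_left (c : ℝ) (x v : E n) : mink (c • x) v = c * mink x v := by
  rw [mink_comm, mink_smul_right, mink_comm v x]

/-- `v ∧ w` as an endomorphism: `x ↦ ⟨v,x⟩ w − ⟨w,x⟩ v`. -/
def wedge {n : ℕ} (v w : E n) : E n →L[ℝ] E n :=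
  LinearMap.toContinuousLinearMap
    { toFun := fun x => mink v x • w - mink w x • v
      map_add' := by
        intro x y
        simp only [mink_add_right, add_smul]
        abel
      map_smul' := by
        intro c x
        simp only [mink_smul_right, RingHom.id_apply, mul_smul, smul_sub] }

/-- rank one endomorphism `vw* : x ↦ ⟨x,w⟩ v`. -/
def rankOne {n : ℕ} (v w : E n) : E n →L[ℝ] E n :=
  LinearMap.toContinuousLinearMap
    { toFun := fun x => mink x w • v
      map_add' := by
        intro x y
        simp only [mink_add_left, add_smul]
      map_smul' := by
        intro c x
        simp only [mink_smul_left, RingHom.id_apply, mul_smul] }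


lemma key1 {F : Type*} [NormedAddCommGroup F] [NormedSpace ℝ F] [CompleteSpace F]
    (v v' : ℝ → F) (δ K : ℝ) (hδ : 0 < δ) (hK : 0 ≤ K)
    (hv : ∀ t ∈ Ioo 0 δ, HasDerivAt v (v' t) t)
    (hb : ∀ t ∈ Ioo 0 δ, √t * ‖v' t‖ ≤ K * ‖v t‖)
    (hne : ∀ t ∈ Ioo 0 δ, v t ≠ 0) :
    ∃ v0 : F, v0 ≠ 0 ∧ ∃ M, ∀ t ∈ Ioo 0 δ, ‖v t - v0‖ ≤ M * √t := by
  set σ := √δ with hσ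
  have hσ0 : 0 < σ := Real.sqrt_pos.2 hδ
  have hmem : ∀ s ∈ Ioo 0 σ, s^2 ∈ Ioo 0 δ := fun s hs =>
    ⟨by have := hs.1; positivity, by
      have := Real.sq_sqrt hδ.le
      rw [← hσ] at this
      have := hs.1; have := hs.2; nlinarith⟩
  let w : ℝ → F := fun s => v (s^2)
  let w' : ℝ → F := fun s => (2*s) • v' (s^2)
  have hw : ∀ s ∈ Ioo 0 σ, HasDerivAt w (w' s) s := by
    intro s hs
    have h1 : HasDerivAt (fun s : ℝ => s^2) (2*s) s := by simpa using hasDerivAt_pow 2 s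
    exact HasDerivAt.scomp (h := fun s : ℝ => s^2) s (hv _ (hmem s hs)) h1
  have hwb : ∀ s ∈ Ioo 0 σ, ‖w' s‖ ≤ (2*K) * ‖w s‖ := by
    intro s hs
    have h := hb _ (hmem s hs)
    rw [Real.sqrt_sq hs.1.le] at h
    simp only [w, w', norm_smul, Real.norm_eq_abs, abs_mul, abs_two, abs_of_pos hs.1]
    linarith
  -- forward Gronwall
  have hf : ∀ s ∈ Ioo 0 σ, ∀ u ∈ Ioo 0 σ, s ≤ u → ‖w u‖ ≤ ‖w s‖ * Real.exp (2*K*(u-s)) := by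
    intro s hs u hu hsu
    have := norm_le_gronwallBound_of_norm_deriv_right_le (f := w) (f' := w') (δ := ‖w s‖)
      (K := 2*K) (ε := 0) (a := s) (b := u)
      (fun x hx => (hw x ⟨hs.1.trans_le hx.1, hx.2.trans_lt hu.2⟩).continuousAt.continuousWithinAt)
      (fun x hx => (hw x ⟨hs.1.trans_le hx.1, hx.2.trans hu.2⟩).hasDerivWithinAt)
      le_rfl (fun x hx => by simpa using hwb x ⟨hs.1.trans_le hx.1, hx.2.trans hu.2⟩) u ⟨hsu, le_rfl⟩
    rwa [gronwallBound_ε0] at this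
  have hg : ∀ s ∈ Ioo 0 σ, ∀ u ∈ Ioo 0 σ, u ≤ s → ‖w u‖ ≤ ‖w s‖ * Real.exp (2*K*(s-u)) := by
    intro s hs u hu hsu
    have := norm_le_gronwallBound_of_norm_deriv_right_le (f := fun x => w (-x))
      (f' := fun x => - w' (-x)) (δ := ‖w s‖)
      (K := 2*K) (ε := 0) (a := -s) (b := -u)
      (fun x hx => by
        have := (hw (-x) ⟨by linarith [hx.2, hu.1], by linarith [hx.1, hs.2]⟩)
        have := this.scomp x (hasDerivAt_neg x)
        exact this.continuousAt.continuousWithinAt)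
      (fun x hx => by
        have := (hw (-x) ⟨by linarith [hx.2, hu.1], by linarith [hx.1, hs.2]⟩)
        have := this.scomp x (hasDerivAt_neg x)
        have h3 := this.hasDerivWithinAt (s := Ici x)
        rw [neg_one_smul] at h3
        exact h3)
      (by simp) (fun x hx => by
        simpa using hwb (-x) ⟨by linarith [hx.2, hu.1], by linarith [hx.1, hs.2]⟩) (-u)
      ⟨by linarith, le_rfl⟩
    rw [gronwallBound_ε0] at this
    simp only [neg_neg] at this
    convert this using 3
    ring
  set s0 := σ/2
  have hs0 : s0 ∈ Ioo 0 σ := ⟨by positivity, by simp only [s0]; linarith⟩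
  set P := Real.exp (2*K*σ) with hP
  have hub : ∀ s ∈ Ioo 0 σ, ‖w s‖ ≤ ‖w s0‖ * P := by
    intro s hs
    rcases le_total s s0 with h | h
    · refine (hg s0 hs0 s hs h).trans ?_
      rw [hP]; gcongr; linarith [hs0.2, hs.1]
    · refine (hf s0 hs0 s hs h).trans ?_
      rw [hP]; gcongr; linarith [hs0.1, hs.2]
  have hlb : ∀ s ∈ Ioo 0 σ, s ≤ s0 → ‖w s0‖ ≤ ‖w s‖ * P := by
    intro s hs h
    refine (hf s hs s0 hs0 h).trans ?_
    rw [hP]; gcongr; linarith [hs0.2, hs.1]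
  set M := 2*K*(‖w s0‖ * P)
  have hL : ∀ s ∈ Ioo 0 σ, ∀ u ∈ Ioo 0 σ, ‖w s - w u‖ ≤ M * ‖s - u‖ := by
    intro s hs u hu
    exact (convex_Ioo 0 σ).norm_image_sub_le_of_norm_hasDerivWithin_le
      (fun x hx => (hw x hx).hasDerivWithinAt)
      (fun x hx => (hwb x hx).trans (by simp only [M]; gcongr; exact hub x hx)) hu hs
  have hM : 0 ≤ M := by positivity
  have hLip : LipschitzOnWith ⟨M, hM⟩ w (Ioo 0 σ) :=
    LipschitzOnWith.of_dist_le_mul (fun s hs u hu => by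
      rw [dist_eq_norm, dist_eq_norm]; exact hL s hs u hu)
  have hmemF : Ioo 0 σ ∈ 𝓝[>] (0:ℝ) := Ioo_mem_nhdsGT hσ0
  have hc : Cauchy (map w (𝓝[>] (0:ℝ))) := by
    have h0 : Cauchy (𝓝[>] (0:ℝ)) := cauchy_nhds.mono inf_le_left
    refine ⟨inferInstance, ?_⟩
    rw [prod_map_map_eq]
    exact Tendsto.mono_left hLip.uniformContinuousOn
      (le_inf h0.2 (le_principal_iff.2 (prod_mem_prod hmemF hmemF)))
  obtain ⟨v0, hv0⟩ := CompleteSpace.complete hc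
  have hT : Tendsto w (𝓝[>] 0) (𝓝 v0) := hv0
  refine ⟨v0, ?_, M, ?_⟩
  · have hn := hT.norm.mul_const P
    have : ‖w s0‖ ≤ ‖v0‖ * P := by
      refine ge_of_tendsto hn ?_
      filter_upwards [hmemF, Ioo_mem_nhdsGT hs0.1] with s hs h
      exact hlb s hs h.2.le
    have h2 : 0 < ‖w s0‖ := norm_pos_iff.2 (hne _ (hmem _ hs0))
    rintro rfl
    simp at this
    exact hne _ (hmem _ hs0) this
  · intro t ht
    have hs : √t ∈ Ioo 0 σ := ⟨Real.sqrt_pos.2 ht.1, Real.sqrt_lt_sqrt ht.1.le ht.2⟩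
    have h1 : Tendsto (fun u => ‖w (√t) - w u‖) (𝓝[>] 0) (𝓝 ‖w (√t) - v0‖) :=
      (tendsto_const_nhds.sub hT).norm
    have : ‖w (√t) - v0‖ ≤ M * √t := by
      refine le_of_tendsto h1 ?_
      filter_upwards [hmemF, Ioo_mem_nhdsGT hs.1] with u hu h
      refine (hL _ hs u hu).trans ?_
      gcongr
      rw [Real.norm_eq_abs, abs_of_pos (by linarith [h.2])]
      linarith [h.1]
    simpa [w, Real.sq_sqrt ht.1.le] using this

lemma logb (a : ℝ) (ha : 0 ≤ a) (t : ℝ) (ht : 0 < t) (ht1 : t ≤ 1) :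
    √t * (1 + a * |Real.log t|)^4 ≤ (1 + 8*a)^4 := by
  have h := Real.abs_log_mul_self_rpow_lt t (1/8) ht ht1 (by norm_num)
  rw [abs_mul, abs_of_pos (Real.rpow_pos_of_pos ht _)] at h
  have h1 : t^(1/8:ℝ) ≤ 1 := Real.rpow_le_one ht.le ht1 (by norm_num)
  have h0 : 0 < t^(1/8:ℝ) := Real.rpow_pos_of_pos ht _
  have e : √t = (t^(1/8:ℝ))^4 := by
    rw [Real.sqrt_eq_rpow, ← Real.rpow_natCast, ← Real.rpow_mul ht.le]; norm_num
  rw [e, ← mul_pow]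
  gcongr
  have : a * (|Real.log t| * t^(1/8:ℝ)) ≤ a * 8 := by gcongr; norm_num at h ⊢; linarith
  nlinarith

lemma key2 {F : Type*} [NormedAddCommGroup F] [NormedSpace ℝ F] [CompleteSpace F]
    (A : F →L[ℝ] F) (hA : ∀ x, A (A (A x)) = 0) (B : ℝ → F →L[ℝ] F) (δ C : ℝ) (hδ : 0 < δ)
    (hδ1 : δ ≤ 1) (hC : 0 ≤ C)
    (hB : ∀ t ∈ Ioo 0 δ, ∀ x, ‖B t x - A x‖ ≤ C * t * ‖x‖)
    (x : ℝ → F) (hx : ∀ t ∈ Ioo 0 δ, HasDerivAt x (t⁻¹ • B t (x t)) t)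
    (hne : ∀ t ∈ Ioo 0 δ, x t ≠ 0) :
    ∃ v0 : F, v0 ≠ 0 ∧ ∃ M, ∀ t ∈ Ioo 0 δ,
      ‖x t - Real.log t • A (x t) + (Real.log t ^ 2 / 2) • A (A (x t)) - v0‖ ≤ M * √t := by
  set U : ℝ → F → F := fun l x => x - l • A x + (l^2/2) • A (A x) with hU
  have hinv : ∀ l x, U (-l) (U l x) = x := by
    intro l x
    simp only [hU, map_add, map_sub, map_smul, hA]
    simp only [smul_zero, map_zero]
    module
  have hbd : ∀ l x, ‖U l x‖ ≤ (1 + ‖A‖ * |l|)^2 * ‖x‖ := by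
    intro l x
    have h1 := A.le_opNorm x
    have h2 : ‖A (A x)‖ ≤ ‖A‖ * (‖A‖ * ‖x‖) := (A.le_opNorm _).trans (by gcongr)
    calc ‖U l x‖ ≤ ‖x‖ + ‖l • A x‖ + ‖(l^2/2) • A (A x)‖ :=
          (norm_add_le _ _).trans (by gcongr; exact norm_sub_le _ _)
      _ ≤ ‖x‖ + |l| * (‖A‖ * ‖x‖) + (|l|^2/2) * (‖A‖ * (‖A‖ * ‖x‖)) := by
          rw [norm_smul, norm_smul]
          have : ‖l^2/2‖ = |l|^2/2 := by rw [Real.norm_eq_abs, abs_div, abs_pow]; norm_num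
          rw [this, Real.norm_eq_abs]; gcongr
      _ ≤ _ := by
          have : 0 ≤ |l| * (‖A‖ * ‖x‖) := by positivity
          have : 0 ≤ (|l|^2/2) * (‖A‖ * (‖A‖ * ‖x‖)) := by positivity
          nlinarith
  let v : ℝ → F := fun t => U (Real.log t) (x t)
  let v' : ℝ → F := fun t => t⁻¹ • U (Real.log t) (B t (x t) - A (x t))
  refine key1 v v' δ (C * (1+8*‖A‖)^4) hδ (by positivity) ?_ ?_ ?_
  · intro t ht
    have hl := Real.hasDerivAt_log ht.1.ne'
    have h0 := hx t ht
    have h1 := A.hasFDerivAt.comp_hasDerivAt t h0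
    have h2 := A.hasFDerivAt.comp_hasDerivAt t h1
    have := (h0.sub (hl.smul h1)).add (((hl.pow 2).div_const 2).smul h2)
    refine HasDerivAt.congr_deriv (f := v) this ?_
    simp only [v', hU]
    simp only [map_sub, map_smul, hA, Function.comp, Pi.pow_apply]
    push_cast
    module
  · intro t ht
    have ht0 := ht.1
    have e : x t = U (-Real.log t) (v t) := (hinv _ _).symm
    have h1 : ‖x t‖ ≤ (1 + ‖A‖ * |Real.log t|)^2 * ‖v t‖ := by
      have := hbd (-Real.log t) (v t)
      rwa [abs_neg, ← e] at this
    have h2 := hbd (Real.log t) (B t (x t) - A (x t))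
    have h3 := hB t ht (x t)
    have h4 := logb ‖A‖ (norm_nonneg _) t ht0 (ht.2.le.trans hδ1)
    simp only [v']
    rw [norm_smul, norm_inv, Real.norm_eq_abs, abs_of_pos ht0]
    calc √t * (t⁻¹ * ‖U (Real.log t) (B t (x t) - A (x t))‖)
        ≤ √t * (t⁻¹ * ((1 + ‖A‖ * |Real.log t|)^2 * (C * t * ((1 + ‖A‖ * |Real.log t|)^2 * ‖v t‖)))) := by
          gcongr
          refine h2.trans ?_
          gcongr
          refine h3.trans ?_
          gcongr
      _ = C * (√t * (1 + ‖A‖ * |Real.log t|)^4) * ‖v t‖ := by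
          field_simp
      _ ≤ _ := by gcongr
  · intro t ht h
    apply hne t ht
    rw [← hinv (Real.log t) (x t)]
    change U _ (v t) = 0
    rw [h]; simp [hU]

lemma coord_le (x : E n) (i : Fin (n+2)) : |x i| ≤ ‖x‖ := by
  simpa using PiLp.norm_apply_le x i

lemma mink_le (x y : E n) : |mink x y| ≤ (n+2) * (‖x‖ * ‖y‖) := by
  unfold mink
  refine (Finset.abs_sum_le_sum_abs _ _).trans ?_
  have : ∀ i ∈ (Finset.univ : Finset (Fin (n+2))),
      |(if i = Fin.last (n + 1) then (-1 : ℝ) else 1) * x i * y i| ≤ ‖x‖ * ‖y‖ := by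
    intro i _
    rw [abs_mul, abs_mul]
    have h1 := coord_le x i
    have h2 := coord_le y i
    have : |(if i = Fin.last (n + 1) then (-1 : ℝ) else 1)| = 1 := by split_ifs <;> simp
    rw [this, one_mul]
    gcongr
  refine (Finset.sum_le_card_nsmul _ _ _ this).trans ?_
  simp

lemma mink_sub_left (x y v : E n) : mink (x - y) v = mink x v - mink y v := by
  have : x - y = x + (-1:ℝ) • y := by module
  rw [this, mink_add_left, mink_smul_left]; ring

lemma mink_sub_right (v x y : E n) : mink v (x - y) = mink v x - mink v y := by
  rw [mink_comm, mink_sub_left, mink_comm v x, mink_comm v y]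

lemma mink_last_zero (z : E n) (hz : mink z z = 0) (hl : z (Fin.last (n+1)) = 0) : z = 0 := by
  unfold mink at hz
  have e : ∀ i, (if i = Fin.last (n + 1) then (-1 : ℝ) else 1) * z i * z i = z i ^ 2 := by
    intro i
    split_ifs with h
    · subst h; simp [hl]
    · ring
  simp only [e] at hz
  rw [Finset.sum_eq_zero_iff_of_nonneg (fun i _ => sq_nonneg _)] at hz
  ext i
  simpa using hz i (Finset.mem_univ i)

lemma mink_par (x y : E n) (hx : mink x x = 0) (hy : mink y y = 0) (hxy : mink x y = 0)
    (hx0 : x ≠ 0) : ∃ k : ℝ, y = k • x := by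
  have hl : x (Fin.last (n+1)) ≠ 0 := fun h => hx0 (mink_last_zero x hx h)
  refine ⟨y (Fin.last (n+1)) / x (Fin.last (n+1)), ?_⟩
  rw [← sub_eq_zero]
  apply mink_last_zero
  · simp only [mink_sub_left, mink_sub_right, mink_smul_left, mink_smul_right, hx, hy, hxy,
      mink_comm y x]
    ring
  · simp; field_simp; simp

lemma mink_continuous : Continuous (fun p : E n × E n => mink p.1 p.2) := by
  unfold mink
  fun_prop

lemma mink_tendsto (f : ℝ → E n) (x : E n) (l : Filter ℝ) (h : Tendsto f l (𝓝 x)) :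
    Tendsto (fun t => mink (f t) (f t)) l (𝓝 (mink x x)) := by
  have h1 : Continuous (fun y : E n => mink y y) :=
    mink_continuous.comp (continuous_id.prodMk continuous_id)
  exact (h1.tendsto x).comp h

lemma mink_hasDerivAt (c : ℝ → E n) (c' : E n) (t : ℝ) (h : HasDerivAt c c' t) :
    HasDerivAt (fun s => mink (c s) (c s)) (2 * mink (c t) c') t := by
  have hi : ∀ i, HasDerivAt (fun s => c s i) (c' i) t := fun i =>
    ((EuclideanSpace.proj i : E n →L[ℝ] ℝ).hasFDerivAt.comp_hasDerivAt t h)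
  unfold mink
  have := HasDerivAt.fun_sum (u := (Finset.univ : Finset (Fin (n+2)))) (fun i _ =>
    ((hi i).const_mul (if i = Fin.last (n + 1) then (-1 : ℝ) else 1)).mul (hi i))
  refine HasDerivAt.congr_deriv this ?_
  rw [Finset.mul_sum]
  refine Finset.sum_congr rfl fun i _ => ?_
  ring

lemma wedge_apply (v w x : E n) : wedge v w x = mink v x • w - mink w x • v := rfl

lemma wedge_diff (p q p' q' x : E n) (R η : ℝ) (hp : ‖p‖ ≤ R) (hq : ‖q‖ ≤ R)
    (hp' : ‖p'‖ ≤ R) (hq' : ‖q'‖ ≤ R) (h1 : ‖p - p'‖ ≤ η) (h2 : ‖q - q'‖ ≤ η) :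
    ‖wedge p q x - wedge p' q' x‖ ≤ 4 * (n+2) * R * η * ‖x‖ := by
  have e : wedge p q x - wedge p' q' x =
      (mink (p - p') x • q + mink p' x • (q - q')) -
      (mink (q - q') x • p + mink q' x • (p - p')) := by
    simp only [wedge_apply, mink_sub_left]
    module
  have hR : 0 ≤ R := (norm_nonneg _).trans hp
  have hη : 0 ≤ η := (norm_nonneg _).trans h1
  have a : ∀ u v : E n, ∀ α β : ℝ, ‖u‖ ≤ α → ‖v‖ ≤ β → 
      ‖mink u x • v‖ ≤ (n+2) * (α * ‖x‖) * β := by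
    intro u v α β hu hv
    rw [norm_smul, Real.norm_eq_abs]
    have := mink_le u x
    have : 0 ≤ α := (norm_nonneg _).trans hu
    calc _ ≤ ((n+2) * (‖u‖ * ‖x‖)) * ‖v‖ := by gcongr
      _ ≤ _ := by gcongr
  rw [e]
  have b1 := a _ _ _ _ h1 hq
  have b2 := a _ _ _ _ hp' h2
  have b3 := a _ _ _ _ h2 hp
  have b4 := a _ _ _ _ hq' h1
  calc _ ≤ _ := norm_sub_le _ _
    _ ≤ _ := add_le_add (norm_add_le _ _) (norm_add_le _ _)
    _ ≤ _ := by linarith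

lemma lip0 {F : Type*} [NormedAddCommGroup F] [NormedSpace ℝ F] (f : ℝ → F)
    (hf : DifferentiableAt ℝ f 0) : ∃ C, 0 ≤ C ∧ ∀ᶠ t in 𝓝[>] (0:ℝ), ‖f t - f 0‖ ≤ C * t := by
  have h := hf.isBigO_sub
  obtain ⟨C, hC, hb⟩ := h.exists_nonneg
  refine ⟨C, hC, ?_⟩
  have := hb.bound.filter_mono (nhdsWithin_le_nhds (s := Ioi 0))
  filter_upwards [this, self_mem_nhdsWithin] with t ht h0
  simpa [abs_of_pos (show (0:ℝ) < t from h0)] using ht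

lemma tend_small (w : ℝ → E n) (δ M : ℝ) (hδ : 0 < δ)
    (hw : ∀ t ∈ Ioo 0 δ, ‖w t‖ ≤ M * √t) (k : ℕ) :
    Tendsto (fun t => Real.log t ^ k • w t) (𝓝[>] 0) (𝓝 0) := by
  rw [tendsto_zero_iff_norm_tendsto_zero]
  have h1 : Tendsto (fun t => M * |(Real.log t * t ^ (1/(2*((k:ℝ)+1))))^k * t^(1/(2*((k:ℝ)+1)))|)
      (𝓝[>] 0) (𝓝 0) := by
    have hp : (0:ℝ) < 1/(2*((k:ℝ)+1)) := by positivity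
    have a := (tendsto_log_mul_rpow_nhdsGT_zero hp).pow k
    have b : Tendsto (fun t : ℝ => t^(1/(2*((k:ℝ)+1)))) (𝓝[>] 0) (𝓝 0) := by
      have := (Real.continuousAt_rpow_const 0 _ (Or.inr hp.le)).tendsto
      rw [Real.zero_rpow hp.ne'] at this
      exact this.mono_left nhdsWithin_le_nhds
    simpa using ((a.mul b).abs.const_mul M)
  refine squeeze_zero' (Eventually.of_forall fun _ => norm_nonneg _) ?_ h1
  filter_upwards [Ioo_mem_nhdsGT hδ] with t ht
  have e : √t = (t ^ (1/(2*((k:ℝ)+1))))^k * t^(1/(2*((k:ℝ)+1))) := by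
    rw [← pow_succ, ← Real.rpow_natCast, ← Real.rpow_mul ht.1.le, Real.sqrt_eq_rpow]
    congr 1; push_cast; field_simp
  rw [norm_smul, norm_pow, Real.norm_eq_abs, mul_pow, mul_assoc, ← e, abs_mul, abs_pow,
    abs_of_nonneg (Real.sqrt_nonneg t)]
  have := hw t ht
  calc _ ≤ |Real.log t|^k * (M * √t) := by gcongr
    _ = _ := by ring

set_option maxHeartbeats 1000000 in
/-- Theorem 4.2: at a first-order pole, every Darboux transform converges
to the original curve. -/
theorem stmt12 {n : ℕ} (ε b : ℝ) (hε : 0 < ε) (hb : 0 < b)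
    (c : ℝ → E n) (hc : ContDiffOn ℝ (⊤ : ℕ∞) c (Set.Ioo (-ε) b))
    (hcnull : ∀ t ∈ Set.Ioo (-ε) b, mink (c t) (c t) = 0)
    (hcne : ∀ t ∈ Set.Ioo (-ε) b, c t ≠ 0)
    (hcreg : ∀ t ∈ Set.Ioo (-ε) b, 0 < mink (deriv c t) (deriv c t))
    (lam : ℝ) (hlam : lam ≠ 0)
    (ch : ℝ → E n)
    (hchne : ∀ t ∈ Set.Ioo (0:ℝ) b, ch t ≠ 0)
    (hchnull : ∀ t ∈ Set.Ioo (0:ℝ) b, mink (ch t) (ch t) = 0)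
    (hch : ∀ t ∈ Set.Ioo (0:ℝ) b, HasDerivAt ch
      ((lam / t) • (mink (c t) (ch t) • deriv c t - mink (deriv c t) (ch t) • c t)) t) :
    ∃ r : ℝ → ℝ, (∀ t ∈ Set.Ioo (0:ℝ) b, r t ≠ 0) ∧
      Tendsto (fun t : ℝ => r t • ch t) (𝓝[>] 0) (𝓝 (c 0)) := by
  have hIoo : Ioo (-ε) b ∈ 𝓝 (0:ℝ) := Ioo_mem_nhds (by linarith) hb
  have h0 : (0:ℝ) ∈ Ioo (-ε) b := ⟨by linarith, hb⟩
  have hd0 : DifferentiableAt ℝ c 0 := (hc.contDiffAt hIoo).differentiableAt (by simp)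
  have hd1 : DifferentiableAt ℝ (deriv c) 0 :=
    ((hc.deriv_of_isOpen (m := 1) isOpen_Ioo (by
      have h : ((2:ℕ∞) : WithTop ℕ∞) ≤ ((⊤ : ℕ∞) : WithTop ℕ∞) := by exact_mod_cast le_top
      norm_num at h ⊢
      try exact h)).contDiffAt
      hIoo).differentiableAt (by simp)
  set p := c 0 with hp
  set q := deriv c 0 with hq
  have hpp : mink p p = 0 := hcnull 0 h0
  have hpq : mink p q = 0 := by
    have h1 := mink_hasDerivAt c q 0 hd0.hasDerivAt
    have h2 : HasDerivAt (fun s => mink (c s) (c s)) 0 0 :=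
      (hasDerivAt_const (0:ℝ) (0:ℝ)).congr_of_eventuallyEq (by
        filter_upwards [hIoo] with s hs using hcnull s hs)
    have := h1.unique h2
    linarith
  have hqp : mink q p = 0 := by rw [mink_comm, hpq]
  have hm : 0 < mink q q := hcreg 0 h0
  set m := mink q q with hmdef
  set A : E n →L[ℝ] E n := lam • wedge p q with hAdef
  have hAx : ∀ x, A x = lam • (mink p x • q - mink q x • p) := fun x => rfl
  have hAA : ∀ x, A (A x) = (-(lam^2 * mink p x * m)) • p := by
    intro x
    rw [hAx (A x), hAx x]
    simp only [mink_smul_right, mink_sub_right, hpp, hpq, hqp, ← hmdef]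
    module
  have hAp : A p = 0 := by rw [hAx, hpp, hqp]; simp
  have hAAA : ∀ x, A (A (A x)) = 0 := by
    intro x
    rw [hAA x, map_smul, hAp, smul_zero]
  obtain ⟨C0, hC0, hL0⟩ := lip0 c hd0
  obtain ⟨C1, hC1, hL1⟩ := lip0 (deriv c) hd1
  obtain ⟨δ₀, hδ₀, hsub⟩ := mem_nhdsGT_iff_exists_Ioo_subset.1 (hL0.and hL1)
  have hδ₀' : (0:ℝ) < δ₀ := hδ₀
  set δ := min δ₀ (min 1 b) with hδdef
  have hδ : 0 < δ := by positivity
  have hδ1 : δ ≤ 1 := (min_le_right _ _).trans (min_le_left _ _)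
  have hδb : δ ≤ b := (min_le_right _ _).trans (min_le_right _ _)
  have hsub' : ∀ t ∈ Ioo 0 δ, ‖c t - p‖ ≤ C0 * t ∧ ‖deriv c t - q‖ ≤ C1 * t := fun t ht =>
    hsub ⟨ht.1, ht.2.trans_le (min_le_left _ _)⟩
  have hinb : ∀ t ∈ Ioo 0 δ, t ∈ Ioo 0 b := fun t ht => ⟨ht.1, ht.2.trans_le hδb⟩
  set R := ‖p‖ + ‖q‖ + (C0 + C1) with hR
  have key := key2 A hAAA (fun t => lam • wedge (c t) (deriv c t)) δ
    (|lam| * (4 * (n+2) * R * (C0 + C1))) hδ hδ1 (by positivity)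
    (by
      intro t ht x
      obtain ⟨a1, a2⟩ := hsub' t ht
      have ht0 := ht.1
      have ht1 : t ≤ 1 := ht.2.le.trans hδ1
      have n0 := norm_nonneg p
      have n1 := norm_nonneg q
      have b1 : C0 * t ≤ C0 := mul_le_of_le_one_right hC0 ht1
      have b2 : C1 * t ≤ C1 := mul_le_of_le_one_right hC1 ht1
      have e1 : ‖c t‖ ≤ ‖p‖ + ‖c t - p‖ := norm_le_norm_add_norm_sub' _ _
      have e2 : ‖deriv c t‖ ≤ ‖q‖ + ‖deriv c t - q‖ := norm_le_norm_add_norm_sub' _ _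
      have := wedge_diff (c t) (deriv c t) p q x R ((C0 + C1) * t) (by linarith) (by linarith)
        (by linarith) (by linarith) (by nlinarith) (by nlinarith)
      have e : (lam • wedge (c t) (deriv c t)) x - A x
          = lam • (wedge (c t) (deriv c t) x - wedge p q x) := by
        rw [hAdef, smul_sub]; rfl
      rw [e, norm_smul, Real.norm_eq_abs]
      calc _ ≤ |lam| * (4 * (n+2) * R * ((C0 + C1) * t) * ‖x‖) := by gcongr
        _ = _ := by ring)
    ch
    (by
      intro t ht
      refine (hch t (hinb t ht)).congr_deriv ?_
      change _ = t⁻¹ • lam • (mink (c t) (ch t) • deriv c t - mink (deriv c t) (ch t) • c t)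
      rw [smul_smul]; congr 1; ring)
    (fun t ht => hchne t (hinb t ht))
  obtain ⟨v0, hv0, M, hM⟩ := key
  set v : ℝ → E n := fun t =>
    ch t - Real.log t • A (ch t) + (Real.log t ^ 2 / 2) • A (A (ch t)) with hv
  have hrep : ∀ t, ch t = v t + Real.log t • A (v t) + (Real.log t ^ 2 / 2) • A (A (v t)) := by
    intro t
    simp only [hv, map_add, map_sub, map_smul, hAAA]
    simp only [smul_zero, map_zero]
    module
  have hsm := fun k => tend_small (fun t => v t - v0) δ M hδ hM k
  have hvt : Tendsto v (𝓝[>] 0) (𝓝 v0) := by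
    have := hsm 0
    simp only [pow_zero, one_smul] at this
    exact tendsto_sub_nhds_zero_iff.1 this
  have hvnull : ∀ t ∈ Ioo 0 δ, mink (v t) (v t) = 0 := by
    intro t ht
    have hn := hchnull t (hinb t ht)
    simp only [hv, hAA]
    simp only [hAx, mink_sub_left, mink_sub_right, mink_add_left, mink_add_right, mink_smul_left,
      mink_smul_right, hn, hpp, hpq, hqp, ← hmdef, mink_comm (ch t) p, mink_comm (ch t) q]
    ring
  have hv0null : mink v0 v0 = 0 := by
    have h1 : Tendsto (fun t => mink (v t) (v t)) (𝓝[>] 0) (𝓝 (mink v0 v0)) :=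
      mink_tendsto v v0 _ hvt
    refine tendsto_nhds_unique h1 (tendsto_const_nhds.congr' ?_)
    filter_upwards [Ioo_mem_nhdsGT hδ] with t ht using (hvnull t ht).symm
  by_cases hk : mink p v0 = 0
  · obtain ⟨k, hk'⟩ := mink_par p v0 hpp hv0null hk (hcne 0 h0)
    have hk0 : k ≠ 0 := by rintro rfl; simp at hk'; exact hv0 hk'
    have hAv0 : A v0 = 0 := by rw [hk', map_smul, hAp, smul_zero]
    refine ⟨fun _ => k⁻¹, fun _ _ => inv_ne_zero hk0, ?_⟩
    have l1 := (A.continuous.tendsto 0).comp (hsm 1)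
    have l2 := ((A.comp A).continuous.tendsto 0).comp (hsm 2)
    have l3 := ((hvt.add l1).add (l2.const_smul (1/2:ℝ))).const_smul k⁻¹
    simp only [map_zero, smul_zero, add_zero] at l3
    have : k⁻¹ • v0 = p := by rw [hk', smul_smul, inv_mul_cancel₀ hk0, one_smul]
    rw [this] at l3
    refine l3.congr fun t => ?_
    simp only [Function.comp, ContinuousLinearMap.comp_apply, map_smul, map_sub, hAv0, sub_zero,
      map_zero]
    congr 1
    conv_rhs => rw [hrep t]
    rw [pow_one]
    module
  · set μ := -(lam^2 * mink p v0 * m) / 2 with hμ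
    have hμ0 : μ ≠ 0 := by
      rw [hμ]
      exact div_ne_zero (neg_ne_zero.2 (mul_ne_zero (mul_ne_zero (pow_ne_zero _ hlam) hk) hm.ne'))
        two_ne_zero
    refine ⟨fun t => if Real.log t = 0 then 1 else (μ * Real.log t ^ 2)⁻¹, ?_, ?_⟩
    · intro t _
      dsimp only
      split_ifs with h
      · exact one_ne_zero
      · exact inv_ne_zero (mul_ne_zero hμ0 (pow_ne_zero _ h))
    · have li : Tendsto (fun t => (Real.log t)⁻¹) (𝓝[>] 0) (𝓝 0) :=
        tendsto_inv_atBot_zero.comp Real.tendsto_log_nhdsGT_zero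
      have l1 := (A.continuous.tendsto v0).comp hvt
      have l2 := ((A.comp A).continuous.tendsto v0).comp hvt
      have l3 := ((((li.pow 2).smul hvt).add (li.smul l1)).add
        (l2.const_smul (1/2:ℝ))).const_smul μ⁻¹
      have : μ⁻¹ • ((0:ℝ)^2 • v0 + (0:ℝ) • A v0 + (1/2:ℝ) • (A.comp A) v0) = p := by
        rw [ContinuousLinearMap.comp_apply, hAA]
        have e : (1/2:ℝ) • (-(lam^2 * mink p v0 * m)) • p = μ • p := by
          rw [smul_smul, hμ]; congr 1; ring
        rw [e]
        simp [smul_smul, inv_mul_cancel₀ hμ0]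
      rw [this] at l3
      refine l3.congr' ?_
      filter_upwards [Ioo_mem_nhdsGT hδ] with t ht
      have hlog : Real.log t ≠ 0 := (Real.log_neg ht.1 (ht.2.trans_le hδ1)).ne
      rw [if_neg hlog]
      conv_rhs => rw [hrep t]
      simp only [Function.comp, ContinuousLinearMap.comp_apply, smul_add, smul_smul]
      have e1 : μ⁻¹ * (Real.log t)⁻¹ ^ 2 = (μ * Real.log t ^ 2)⁻¹ := by field_simp
      have e2 : μ⁻¹ * (Real.log t)⁻¹ = (μ * Real.log t ^ 2)⁻¹ * Real.log t := by field_simp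
      have e3 : μ⁻¹ * (1 / 2) = (μ * Real.log t ^ 2)⁻¹ * (Real.log t ^ 2 / 2) := by field_simp
      rw [e1, e2, e3]
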